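/- Let P = {(x, y, z) ∈ ℝ³ : x ≥ 0, y ≥ 0, z ≥ 0, −x + (5/2)z + 1 ≥ 0, −(1/2)x − y + (1/4)z + 1 ≥ 0, −(1/4)x − y − (7/8)z + 1 ≥ 0} and let S be the convex hull of the six points s_1 = (3/4, 1/8, 0), s_2 = (3/4, 1/2, 0), s_3 = (3/11, 17/22, 0), s_4 = (2, 0, 1/2), s_5 = (1/2, 0, 3/4), s_6 = (1/6, 0, 7/12). Then (i) there exist five points q_1, …, q_5 ∈ ℝ³ with S ⊆ conv{q_1, …, q_5} ⊆ P; (ii) for any five points q_1, …, q_5 ∈ ℝ³ with S ⊆ conv{q_1, …, q_5} ⊆ P, one of the q_i equals (2 − √2, 0, 0); in particular there is no choice of five rational points q_1, …, q_5 ∈ ℚ³ with S ⊆ conv{q_1, …, q_5} ⊆ P; and (iii) there is no choice of four points q_1, …, q_4 ∈ ℝ³ with S ⊆ conv{q_1, …, q_4} ⊆ P. -/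

import Mathlib

open Set

/-- The outer polytope `P ⊆ ℝ³` of the nested polytope instance. -/
def outerP : Set (Fin 3 → ℝ) :=
  {x | 0 ≤ x 0 ∧ 0 ≤ x 1 ∧ 0 ≤ x 2 ∧
       0 ≤ -x 0 + (5 / 2) * x 2 + 1 ∧
       0 ≤ -(1 / 2) * x 0 - x 1 + (1 / 4) * x 2 + 1 ∧
       0 ≤ -(1 / 4) * x 0 - x 1 - (7 / 8) * x 2 + 1}

/-- The inner polytope `S`: the convex hull of the six given points. -/
noncomputable def innerS : Set (Fin 3 → ℝ) :=
  convexHull ℝ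
    ({![3/4, 1/8, 0], ![3/4, 1/2, 0], ![3/11, 17/22, 0],
      ![2, 0, 1/2], ![1/2, 0, 3/4], ![1/6, 0, 7/12]} : Set (Fin 3 → ℝ))

/-! The points of `S` lie on two faces of `P`: three on `{z = 0}` and three on `{y = 0}`. A point
of a face that is a convex combination of the `qᵢ` is a convex combination of those `qᵢ` on that
face. So each face poses a problem of nested polygons, and the two problems share only the `qᵢ` on
the edge `y = z = 0`. Each face needs at least two points off that edge. If the edge carries no
point other than `(t, 0, 0)`, then the face `{z = 0}` needs a third point off the edge when
`t² - 4t + 2 > 0`, and the face `{y = 0}` needs one when `t² - 4t + 2 < 0`. Counting rules out four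
points, and for five points it leaves only the root `t = 2 - √2` of the quadratic in `[0, 1]`.
-/

section FaceOfHull

variable {E : Type*} [AddCommGroup E] [Module ℝ E] {B : Set E} {x : E}

theorem mem_convexHull_sep_eq_zero (f : E →ᵃ[ℝ] ℝ) (hB : ∀ b ∈ B, 0 ≤ f b)
    (hx : x ∈ convexHull ℝ B) (hfx : f x ≤ 0) : x ∈ convexHull ℝ {b ∈ B | f b = 0} := by
  let C : Set E := {y | 0 ≤ f y ∧ (f y = 0 → y ∈ convexHull ℝ {b ∈ B | f b = 0})}
  have hBC : B ⊆ C := fun b hb => ⟨hB b hb, fun h => subset_convexHull ℝ _ ⟨hb, h⟩⟩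
  have hC : Convex ℝ C := by
    refine convex_iff_forall_pos.2 fun y hy z hz a c ha hc hac => ?_
    have hf : f (a • y + c • z) = a * f y + c * f z := Convex.combo_affine_apply hac
    have hay := mul_nonneg ha.le hy.1
    have hcz := mul_nonneg hc.le hz.1
    refine ⟨hf ▸ add_nonneg hay hcz, fun h0 => ?_⟩
    have hfy : f y = 0 := (mul_eq_zero.1 (by linarith : a * f y = 0)).resolve_left ha.ne'
    have hfz : f z = 0 := (mul_eq_zero.1 (by linarith : c * f z = 0)).resolve_left hc.ne'
    exact convex_convexHull ℝ _ (hy.2 hfy) (hz.2 hfz) ha.le hc.le hac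
  have hxC : x ∈ C := convexHull_min hBC hC hx
  exact hxC.2 (hfx.antisymm hxC.1)

theorem exists_mem_nonpos_and_pos_of_mem_convexHull (f h : E →ᵃ[ℝ] ℝ) (hx : x ∈ convexHull ℝ B)
    (hfx : f x ≤ 0) (hhx : 0 < h x) (hfh : ∀ b ∈ B, h b ≤ 0 → 0 ≤ f b) :
    ∃ b ∈ B, f b ≤ 0 ∧ 0 < h b := by
  by_contra! hno
  have hf : ∀ b ∈ B, 0 ≤ f b := fun b hb => by
    by_contra! hfb
    exact hfb.not_ge (hfh b hb (hno b hb hfb.le))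
  have hsub : {b ∈ B | f b = 0} ⊆ h ⁻¹' Iic 0 := fun b hb => hno b hb.1 hb.2.le
  have : h x ≤ 0 :=
    convexHull_min hsub ((convex_Iic 0).affine_preimage h) (mem_convexHull_sep_eq_zero f hf hx hfx)
  exact this.not_gt hhx

end FaceOfHull

section Plane

/-- Twice the signed area of the triangle `a b c` as an affine function of `c`: it is positive when
`c` lies to the left of the line from `a` to `b`. -/
def signedArea (a b : ℝ × ℝ) : ℝ × ℝ →ᵃ[ℝ] ℝ where
  toFun c := (b.1 - a.1) * (c.2 - a.2) - (b.2 - a.2) * (c.1 - a.1)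
  linear := (b.1 - a.1) • LinearMap.snd ℝ ℝ ℝ - (b.2 - a.2) • LinearMap.fst ℝ ℝ ℝ
  map_vadd' c v := by
    simp only [vadd_eq_add, Prod.fst_add, Prod.snd_add, LinearMap.sub_apply, LinearMap.smul_apply,
      LinearMap.fst_apply, LinearMap.snd_apply, smul_eq_mul]
    ring

theorem signedArea_apply (a b c : ℝ × ℝ) :
    signedArea a b c = (b.1 - a.1) * (c.2 - a.2) - (b.2 - a.2) * (c.1 - a.1) :=
  rfl

variable {B : Set (ℝ × ℝ)} {l r t : ℝ} {s s₁ s₂ s₃ : ℝ × ℝ}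

theorem exists_offAxis_signedArea_left_nonpos (hB : ∀ b ∈ B, 0 ≤ b.2)
    (hr : ∀ b ∈ B, b.2 = 0 → b.1 ≤ r) (hs : s ∈ convexHull ℝ B) (hs0 : 0 < s.2) :
    ∃ b ∈ B, signedArea (r, 0) s b ≤ 0 ∧ 0 < b.2 := by
  refine exists_mem_nonpos_and_pos_of_mem_convexHull (signedArea (r, 0) s)
    (LinearMap.snd ℝ ℝ ℝ).toAffineMap hs (by simp [signedArea_apply, mul_comm]) hs0
    fun b hb hb0 => ?_
  have hb2 : b.2 = 0 := le_antisymm hb0 (hB b hb)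
  simp only [signedArea_apply, hb2]
  linarith [mul_nonneg hs0.le (sub_nonneg.2 (hr b hb hb2))]

theorem exists_offAxis_signedArea_right_nonpos (hB : ∀ b ∈ B, 0 ≤ b.2)
    (hl : ∀ b ∈ B, b.2 = 0 → l ≤ b.1) (hs : s ∈ convexHull ℝ B) (hs0 : 0 < s.2) :
    ∃ b ∈ B, signedArea s (l, 0) b ≤ 0 ∧ 0 < b.2 := by
  refine exists_mem_nonpos_and_pos_of_mem_convexHull (signedArea s (l, 0))
    (LinearMap.snd ℝ ℝ ℝ).toAffineMap hs (by simp [signedArea_apply]) hs0 fun b hb hb0 => ?_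
  have hb2 : b.2 = 0 := le_antisymm hb0 (hB b hb)
  simp only [signedArea_apply, hb2]
  linarith [mul_nonneg hs0.le (sub_nonneg.2 (hl b hb hb2))]

theorem two_le_encard_offAxis (hB : ∀ b ∈ B, 0 ≤ b.2) (hl : ∀ b ∈ B, b.2 = 0 → l ≤ b.1)
    (hr : ∀ b ∈ B, b.2 = 0 → b.1 ≤ r) (h₁ : s₁ ∈ convexHull ℝ B) (h₂ : s₂ ∈ convexHull ℝ B)
    (h₁0 : 0 < s₁.2) (h₂0 : 0 < s₂.2)
    (hsep : ∀ b ∈ B, signedArea (r, 0) s₁ b ≤ 0 → 0 < signedArea s₂ (l, 0) b) :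
    2 ≤ {b ∈ B | 0 < b.2}.encard := by
  obtain ⟨u, hu, hu₁, hu0⟩ := exists_offAxis_signedArea_left_nonpos hB hr h₁ h₁0
  obtain ⟨v, hv, hv₂, hv0⟩ := exists_offAxis_signedArea_right_nonpos hB hl h₂ h₂0
  have huv : u ≠ v := by
    rintro rfl
    exact hv₂.not_gt (hsep u hu hu₁)
  calc (2 : ℕ∞) = ({u, v} : Set (ℝ × ℝ)).encard := (encard_pair huv).symm
    _ ≤ _ := encard_le_encard (pair_subset (mem_sep hu hu0) (mem_sep hv hv0))

/- The line through `(t, 0)` and `s₁` produces a point of `B` on or to the right of it, the line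
through `(t, 0)` and `s₃` another one on or to the left of it. The line `p s₂` shows that `s₂` is
out of reach of these two and `(t, 0)`, so a third point lies strictly between the first two lines.
-/
theorem three_le_encard_offAxis (p : ℝ × ℝ) (hB : ∀ b ∈ B, 0 ≤ b.2)
    (ht : ∀ b ∈ B, b.2 = 0 → b.1 = t) (h₁ : s₁ ∈ convexHull ℝ B) (h₂ : s₂ ∈ convexHull ℝ B)
    (h₃ : s₃ ∈ convexHull ℝ B) (h₁0 : 0 < s₁.2) (h₃0 : 0 < s₃.2)
    (h₁₂ : 0 < signedArea (t, 0) s₁ s₂) (h₁₃ : 0 < signedArea (t, 0) s₁ s₃)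
    (hright : ∀ b ∈ B, signedArea (t, 0) s₁ b ≤ 0 → 0 ≤ signedArea p s₂ b)
    (hleft : ∀ b ∈ B, signedArea s₃ (t, 0) b ≤ 0 → 0 < signedArea p s₂ b) :
    3 ≤ {b ∈ B | 0 < b.2}.encard := by
  obtain ⟨u, hu, hu₁, hu0⟩ :=
    exists_offAxis_signedArea_left_nonpos hB (fun b hb h => (ht b hb h).le) h₁ h₁0
  obtain ⟨v, hv, hv₃, hv0⟩ :=
    exists_offAxis_signedArea_right_nonpos hB (fun b hb h => (ht b hb h).ge) h₃ h₃0
  obtain ⟨w, hw, hwp, hw₁⟩ := exists_mem_nonpos_and_pos_of_mem_convexHull (signedArea p s₂)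
    (signedArea (t, 0) s₁) h₂ (by simp [signedArea_apply, mul_comm]) h₁₂ hright
  have hw₃ : 0 < signedArea s₃ (t, 0) w := by
    by_contra! h
    exact hwp.not_gt (hleft w hw h)
  have hw0 : 0 < w.2 := (hB w hw).lt_of_ne' fun h => by
    simp [signedArea_apply, h, ht w hw h] at hw₁
  have huv : u ≠ v := by
    rintro rfl
    have harea : u.2 * signedArea (t, 0) s₁ s₃ =
        s₃.2 * signedArea (t, 0) s₁ u + s₁.2 * signedArea s₃ (t, 0) u := by
      simp only [signedArea_apply]
      ring
    linarith [mul_pos hu0 h₁₃, mul_nonpos_of_nonneg_of_nonpos h₃0.le hu₁,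
      mul_nonpos_of_nonneg_of_nonpos h₁0.le hv₃]
  have huw : u ≠ w := by
    rintro rfl
    exact hu₁.not_gt hw₁
  have hvw : v ≠ w := by
    rintro rfl
    exact hv₃.not_gt hw₃
  calc (3 : ℕ∞) = ({u, v, w} : Set (ℝ × ℝ)).encard :=
        (encard_eq_three.2 ⟨u, v, w, huv, huw, hvw, rfl⟩).symm
    _ ≤ _ := encard_le_encard
      (insert_subset (mem_sep hu hu0) (pair_subset (mem_sep hv hv0) (mem_sep hw hw0)))

/-- The face `z = 0` of `outerP` in the coordinates `(x, y)`. -/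
def faceZ : Set (ℝ × ℝ) :=
  {b | 0 ≤ b.1 ∧ 0 ≤ b.2 ∧ b.1 ≤ 1 ∧ b.1 + 2 * b.2 ≤ 2}

/-- A polygon containing the face `y = 0` of `outerP`, in the coordinates `(x, z)`: the constraint
`-x/2 - y + z/4 + 1 ≥ 0` of `outerP` is left out. -/
def faceY : Set (ℝ × ℝ) :=
  {b | 0 ≤ b.1 ∧ 0 ≤ b.2 ∧ b.1 ≤ 1 + 5 / 2 * b.2 ∧ 2 * b.1 + 7 * b.2 ≤ 8}

theorem two_le_encard_offAxis_of_subset_faceZ (hB : B ⊆ faceZ)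
    (h₂ : (3 / 4, 1 / 2) ∈ convexHull ℝ B) (h₃ : (3 / 11, 17 / 22) ∈ convexHull ℝ B) :
    2 ≤ {b ∈ B | 0 < b.2}.encard := by
  refine two_le_encard_offAxis (l := 0) (r := 1) (fun b hb => (hB hb).2.1) (fun b hb _ => (hB hb).1)
    (fun b hb _ => (hB hb).2.2.1) h₂ h₃ (by norm_num) (by norm_num) fun b hb h => ?_
  obtain ⟨-, -, -, hb₁₂⟩ := hB hb
  simp only [signedArea_apply] at h ⊢
  linarith

theorem two_le_encard_offAxis_of_subset_faceY (hB : B ⊆ faceY)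
    (h₄ : (2, 1 / 2) ∈ convexHull ℝ B) (h₆ : (1 / 6, 7 / 12) ∈ convexHull ℝ B) :
    2 ≤ {b ∈ B | 0 < b.2}.encard := by
  refine two_le_encard_offAxis (l := 0) (r := 1) (fun b hb => (hB hb).2.1) (fun b hb _ => (hB hb).1)
    (fun b hb h => ?_) h₄ h₆ (by norm_num) (by norm_num) fun b hb h => ?_
  · linarith [(hB hb).2.2.1]
  · obtain ⟨-, hb₂, -⟩ := hB hb
    simp only [signedArea_apply] at h ⊢
    linarith

theorem three_le_encard_offAxis_of_subset_faceZ (hB : B ⊆ faceZ)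
    (h₁ : (3 / 4, 1 / 8) ∈ convexHull ℝ B) (h₂ : (3 / 4, 1 / 2) ∈ convexHull ℝ B)
    (h₃ : (3 / 11, 17 / 22) ∈ convexHull ℝ B) (ht1 : t ≤ 1) (htpos : 0 < t ^ 2 - 4 * t + 2)
    (ht : ∀ b ∈ B, b.2 = 0 → b.1 = t) : 3 ≤ {b ∈ B | 0 < b.2}.encard := by
  have ht' : t < 3 / 5 := by nlinarith
  -- The line through `p` and `s₂` meets the line from `(t, 0)` through `s₁` on `x = 1`.
  refine three_le_encard_offAxis (3 / 4 + (3 - 4 * t), 1 / 2 - (4 - 6 * t))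
    (fun b hb => (hB hb).2.1) ht h₁ h₂ h₃ (by norm_num) (by norm_num) ?_ ?_
    (fun b hb hb₁ => ?_) (fun b hb hb₃ => ?_)
  · simp only [signedArea_apply]
    linarith
  · simp only [signedArea_apply]
    linarith
  · simp only [signedArea_apply] at hb₁ ⊢
    obtain ⟨-, -, hbx, -⟩ := hB hb
    linarith [mul_nonneg (by linarith : 0 ≤ 9 / 2 - 6 * t) (sub_nonneg.2 hbx)]
  · obtain ⟨-, -, -, hbxy⟩ := hB hb
    have hμ : 0 ≤ 132 * t ^ 2 - 192 * t + 75 := by nlinarith [sq_nonneg (t - 8 / 11)]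
    have hedge := mul_nonneg hμ (sub_nonneg.2 hbxy)
    have hline := mul_nonneg (by linarith : 0 ≤ 5 - 8 * t) (neg_nonneg.2 hb₃)
    refine pos_of_mul_pos_right (a := 40 - 22 * t) ?_ (by linarith)
    calc 0 < (132 * t ^ 2 - 192 * t + 75) * (2 - (b.1 + 2 * b.2)) +
          22 * ((5 - 8 * t) * -signedArea (3 / 11, 17 / 22) (t, 0) b) +
          15 * (t ^ 2 - 4 * t + 2) := by linarith
      _ = _ := by
        simp only [signedArea_apply]
        ring

theorem three_le_encard_offAxis_of_subset_faceY (hB : B ⊆ faceY)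
    (h₄ : (2, 1 / 2) ∈ convexHull ℝ B) (h₅ : (1 / 2, 3 / 4) ∈ convexHull ℝ B)
    (h₆ : (1 / 6, 7 / 12) ∈ convexHull ℝ B) (ht1 : t ≤ 1) (htneg : t ^ 2 - 4 * t + 2 < 0)
    (ht : ∀ b ∈ B, b.2 = 0 → b.1 = t) : 3 ≤ {b ∈ B | 0 < b.2}.encard := by
  have ht' : 1 / 2 < t := by nlinarith
  -- The line through `p` and `s₅` meets the line from `(t, 0)` through `s₄` on `2x + 7z = 8`.
  refine three_le_encard_offAxis (1 / 2 + (98 - 28 * t), 3 / 4 - (13 - 4 * t))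
    (fun b hb => (hB hb).2.1) ht h₄ h₅ h₆ (by norm_num) (by norm_num) ?_ ?_
    (fun b hb hb₄ => ?_) (fun b hb hb₆ => ?_)
  · simp only [signedArea_apply]
    linarith
  · simp only [signedArea_apply]
    linarith
  · simp only [signedArea_apply] at hb₄ ⊢
    obtain ⟨-, -, -, hbxz⟩ := hB hb
    linarith [mul_nonneg (by linarith : 0 ≤ 10 - 2 * t) (sub_nonneg.2 hbxz)]
  · obtain ⟨hbx, -⟩ := hB hb
    have hμ : 0 ≤ 686 - 196 * t - (12 * t - 2) * (13 - 4 * t) := by nlinarith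
    have hedge := mul_nonneg hμ hbx
    have hline := mul_nonneg (by linarith : 0 ≤ 98 - 28 * t) (neg_nonneg.2 hb₆)
    refine pos_of_mul_pos_right (a := 12 * t - 2) ?_ (by linarith)
    calc 0 < (686 - 196 * t - (12 * t - 2) * (13 - 4 * t)) * b.1 +
          12 * ((98 - 28 * t) * -signedArea (1 / 6, 7 / 12) (t, 0) b) +
          80 * -(t ^ 2 - 4 * t + 2) := by linarith
      _ = _ := by
        simp only [signedArea_apply]
        ring

end Plane

section Space

variable {A : Set (Fin 3 → ℝ)} {j k : Fin 3}

/-- The points of `A` in the coordinate plane `x j = 0`, in the planar coordinates `(x 0, x k)`. -/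
def facePoints (A : Set (Fin 3 → ℝ)) (j k : Fin 3) : Set (ℝ × ℝ) :=
  (LinearMap.proj 0).prod (LinearMap.proj (R := ℝ) k) '' {a ∈ A | a j = 0}

theorem mem_convexHull_facePoints (k : Fin 3) (hA : ∀ a ∈ A, 0 ≤ a j) {s : Fin 3 → ℝ}
    (hs : s ∈ convexHull ℝ A) (hsj : s j = 0) : (s 0, s k) ∈ convexHull ℝ (facePoints A j k) := by
  rw [facePoints, ← LinearMap.image_convexHull]
  let coord : (Fin 3 → ℝ) →ₗ[ℝ] ℝ := LinearMap.proj j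
  exact ⟨s, mem_convexHull_sep_eq_zero coord.toAffineMap hA hs hsj.le, rfl⟩

theorem encard_offAxis_facePoints_le (A : Set (Fin 3 → ℝ)) (j k : Fin 3) :
    {b ∈ facePoints A j k | 0 < b.2}.encard ≤ {a ∈ A | a j = 0 ∧ 0 < a k}.encard := by
  refine (encard_le_encard ?_).trans (encard_image_le (fun a => (a 0, a k)) _)
  rintro _ ⟨⟨a, ⟨ha, haj⟩, rfl⟩, hak⟩
  exact ⟨a, ⟨ha, haj, hak⟩, rfl⟩

/-- The convex hull of `A` is nested between `outerP` and `innerS`. -/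
def IsNested (A : Set (Fin 3 → ℝ)) : Prop :=
  innerS ⊆ convexHull ℝ A ∧ convexHull ℝ A ⊆ outerP

namespace IsNested

theorem subset_outerP (h : IsNested A) : A ⊆ outerP :=
  (subset_convexHull ℝ A).trans h.2

theorem facePoints_subset_faceZ (h : IsNested A) : facePoints A 2 1 ⊆ faceZ := by
  rintro _ ⟨a, ⟨ha, ha2⟩, rfl⟩
  obtain ⟨h0, h1, -, h3, h4, -⟩ := h.subset_outerP ha
  rw [ha2] at h3 h4
  exact ⟨h0, h1, show a 0 ≤ 1 by linarith, show a 0 + 2 * a 1 ≤ 2 by linarith⟩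

theorem facePoints_subset_faceY (h : IsNested A) : facePoints A 1 2 ⊆ faceY := by
  rintro _ ⟨a, ⟨ha, ha1⟩, rfl⟩
  obtain ⟨h0, -, h2, h3, -, h5⟩ := h.subset_outerP ha
  rw [ha1] at h5
  exact ⟨h0, h2, show a 0 ≤ 1 + 5 / 2 * a 2 by linarith, show 2 * a 0 + 7 * a 2 ≤ 8 by linarith⟩

theorem mem_convexHull_facePoints_two (h : IsNested A) {x y : ℝ} (hs : ![x, y, 0] ∈ innerS) :
    (x, y) ∈ convexHull ℝ (facePoints A 2 1) :=
  mem_convexHull_facePoints 1 (fun _ ha => (h.subset_outerP ha).2.2.1) (h.1 hs) rfl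

theorem mem_convexHull_facePoints_one (h : IsNested A) {x z : ℝ} (hs : ![x, 0, z] ∈ innerS) :
    (x, z) ∈ convexHull ℝ (facePoints A 1 2) :=
  mem_convexHull_facePoints 2 (fun _ ha => (h.subset_outerP ha).2.1) (h.1 hs) rfl

theorem two_le_encard_offAxis_faceZ (h : IsNested A) :
    2 ≤ {a ∈ A | a 2 = 0 ∧ 0 < a 1}.encard :=
  (two_le_encard_offAxis_of_subset_faceZ h.facePoints_subset_faceZ
    (h.mem_convexHull_facePoints_two (subset_convexHull ℝ _ (by simp)))
    (h.mem_convexHull_facePoints_two (subset_convexHull ℝ _ (by simp)))).trans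
      (encard_offAxis_facePoints_le A 2 1)

theorem two_le_encard_offAxis_faceY (h : IsNested A) :
    2 ≤ {a ∈ A | a 1 = 0 ∧ 0 < a 2}.encard :=
  (two_le_encard_offAxis_of_subset_faceY h.facePoints_subset_faceY
    (h.mem_convexHull_facePoints_one (subset_convexHull ℝ _ (by simp)))
    (h.mem_convexHull_facePoints_one (subset_convexHull ℝ _ (by simp)))).trans
      (encard_offAxis_facePoints_le A 1 2)

theorem three_le_encard_offAxis_faceZ (h : IsNested A) {t : ℝ} (ht1 : t ≤ 1)
    (htpos : 0 < t ^ 2 - 4 * t + 2) (ht : ∀ a ∈ A, a 1 = 0 → a 2 = 0 → a 0 = t) :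
    3 ≤ {a ∈ A | a 2 = 0 ∧ 0 < a 1}.encard := by
  refine (three_le_encard_offAxis_of_subset_faceZ h.facePoints_subset_faceZ
    (h.mem_convexHull_facePoints_two (subset_convexHull ℝ _ (by simp)))
    (h.mem_convexHull_facePoints_two (subset_convexHull ℝ _ (by simp)))
    (h.mem_convexHull_facePoints_two (subset_convexHull ℝ _ (by simp))) ht1 htpos ?_).trans
      (encard_offAxis_facePoints_le A 2 1)
  rintro _ ⟨a, ⟨ha, ha2⟩, rfl⟩ ha1
  exact ht a ha ha1 ha2

theorem three_le_encard_offAxis_faceY (h : IsNested A) {t : ℝ} (ht1 : t ≤ 1)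
    (htneg : t ^ 2 - 4 * t + 2 < 0) (ht : ∀ a ∈ A, a 1 = 0 → a 2 = 0 → a 0 = t) :
    3 ≤ {a ∈ A | a 1 = 0 ∧ 0 < a 2}.encard := by
  refine (three_le_encard_offAxis_of_subset_faceY h.facePoints_subset_faceY
    (h.mem_convexHull_facePoints_one (subset_convexHull ℝ _ (by simp)))
    (h.mem_convexHull_facePoints_one (subset_convexHull ℝ _ (by simp)))
    (h.mem_convexHull_facePoints_one (subset_convexHull ℝ _ (by simp))) ht1 htneg ?_).trans
      (encard_offAxis_facePoints_le A 1 2)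
  rintro _ ⟨a, ⟨ha, ha1⟩, rfl⟩ ha2
  exact ht a ha ha1 ha2

end IsNested

theorem encard_offAxis_add_encard_offAxis_add_encard_axis_le (A : Set (Fin 3 → ℝ)) (j k : Fin 3) :
    {a ∈ A | a k = 0 ∧ 0 < a j}.encard + {a ∈ A | a j = 0 ∧ 0 < a k}.encard +
      {a ∈ A | a j = 0 ∧ a k = 0}.encard ≤ A.encard := by
  rw [← encard_union_eq, ← encard_union_eq]
  · exact encard_le_encard (union_subset (union_subset (sep_subset ..) (sep_subset ..))
      (sep_subset ..))
  · rw [disjoint_left]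
    rintro a (⟨-, -, hj⟩ | ⟨-, -, hk⟩) ⟨-, hj0, hk0⟩
    exacts [hj.ne' hj0, hk.ne' hk0]
  · rw [disjoint_left]
    rintro a ⟨-, -, hj⟩ ⟨-, hj0, -⟩
    exact hj.ne' hj0

theorem eq_two_sub_sqrt_two_of_le_one {t : ℝ} (ht1 : t ≤ 1) (ht : t ^ 2 - 4 * t + 2 = 0) :
    t = 2 - √2 := by
  have : √2 = 2 - t := (Real.sqrt_eq_iff_mul_self_eq (by norm_num) (by linarith)).2 (by linarith)
  linarith

theorem encard_range_le {ι α : Type*} (f : ι → α) : (range f).encard ≤ ENat.card ι := by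
  rw [← image_univ, ← encard_univ]
  exact encard_image_le f univ

namespace IsNested

theorem five_le_encard_offAxis_add_encard_offAxis (h : IsNested A) {t : ℝ} (ht1 : t ≤ 1)
    (ht0 : t ^ 2 - 4 * t + 2 ≠ 0) (ht : ∀ a ∈ A, a 1 = 0 → a 2 = 0 → a 0 = t) :
    5 ≤ {a ∈ A | a 2 = 0 ∧ 0 < a 1}.encard + {a ∈ A | a 1 = 0 ∧ 0 < a 2}.encard := by
  rcases ht0.lt_or_gt with htneg | htpos
  · exact add_le_add h.two_le_encard_offAxis_faceZ (h.three_le_encard_offAxis_faceY ht1 htneg ht)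
  · exact add_le_add (h.three_le_encard_offAxis_faceZ ht1 htpos ht) h.two_le_encard_offAxis_faceY

theorem mem_of_encard_le_five (h : IsNested A) (hA : A.encard ≤ 5) : ![2 - √2, 0, 0] ∈ A := by
  have hcount := (encard_offAxis_add_encard_offAxis_add_encard_axis_le A 1 2).trans hA
  have hone : {a ∈ A | a 1 = 0 ∧ a 2 = 0}.encard ≤ 1 := by
    by_contra! htwo
    have hsix := (add_le_add (add_le_add h.two_le_encard_offAxis_faceZ
      h.two_le_encard_offAxis_faceY) (Order.add_one_le_of_lt htwo)).trans hcount
    exact absurd hsix (by norm_num)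
  rcases encard_le_one_iff_eq.1 hone with hempty | ⟨m, hm⟩
  · -- The hypothesis on `t` is now vacuous: `t = 0` serves one face and `t = 1` the other.
    have ht : ∀ t, ∀ a ∈ A, a 1 = 0 → a 2 = 0 → a 0 = t := fun t a ha ha1 ha2 =>
      (hempty.subset ⟨ha, ha1, ha2⟩).elim
    have hsix := (add_le_add (h.three_le_encard_offAxis_faceZ (by norm_num) (by norm_num) (ht 0))
      (h.three_le_encard_offAxis_faceY (by norm_num) (by norm_num) (ht 1))).trans
        (le_self_add.trans hcount)
    exact absurd hsix (by norm_num)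
  · obtain ⟨hmA, hm1, hm2⟩ := hm.superset rfl
    have hm0 : m 0 ≤ 1 := by
      obtain ⟨-, -, -, h3, -⟩ := h.subset_outerP hmA
      linarith
    have hroot : m 0 ^ 2 - 4 * m 0 + 2 = 0 := by
      by_contra hne
      have haxis : ∀ a ∈ A, a 1 = 0 → a 2 = 0 → a 0 = m 0 := fun a ha ha1 ha2 =>
        congrFun (hm.subset ⟨ha, ha1, ha2⟩) 0
      have hsix := (add_le_add (h.five_le_encard_offAxis_add_encard_offAxis hm0 hne haxis)
        (hm ▸ encard_singleton m).ge).trans hcount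
      exact absurd hsix (by norm_num)
    convert hmA
    ext x
    fin_cases x
    exacts [(eq_two_sub_sqrt_two_of_le_one hm0 hroot).symm, hm1.symm, hm2.symm]

theorem five_le_encard (h : IsNested A) : 5 ≤ A.encard := by
  by_contra! hA
  have hmem := h.mem_of_encard_le_five hA.le
  have haxis : 1 ≤ {a ∈ A | a 1 = 0 ∧ a 2 = 0}.encard :=
    one_le_encard_iff_nonempty.2 ⟨_, hmem, rfl, rfl⟩
  have hfive := (add_le_add (add_le_add h.two_le_encard_offAxis_faceZ
    h.two_le_encard_offAxis_faceY) haxis).trans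
      (encard_offAxis_add_encard_offAxis_add_encard_axis_le A 1 2)
  exact absurd (hfive.trans_lt hA) (by norm_num)

end IsNested

end Space

section Existence

theorem convex_outerP : Convex ℝ outerP := by
  rintro x ⟨hx₁, hx₂, hx₃, hx₄, hx₅, hx₆⟩ y ⟨hy₁, hy₂, hy₃, hy₄, hy₅, hy₆⟩ a b ha hb hab
  obtain rfl : b = 1 - a := by linarith
  refine ⟨?_, ?_, ?_, ?_, ?_, ?_⟩ <;> simp only [Pi.add_apply, Pi.smul_apply, smul_eq_mul]
  · linarith [mul_nonneg ha hx₁, mul_nonneg hb hy₁]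
  · linarith [mul_nonneg ha hx₂, mul_nonneg hb hy₂]
  · linarith [mul_nonneg ha hx₃, mul_nonneg hb hy₃]
  · linarith [mul_nonneg ha hx₄, mul_nonneg hb hy₄]
  · linarith [mul_nonneg ha hx₅, mul_nonneg hb hy₅]
  · linarith [mul_nonneg ha hx₆, mul_nonneg hb hy₆]

/-- The vertices of a nested polytope. The last four are the points where the rays from the first
one through `s₁`, `s₃`, `s₄` and `s₆` leave `outerP`. -/
noncomputable def nestedVertices : Fin 5 → Fin 3 → ℝ :=
  ![![2 - √2, 0, 0],
    ![1, (3 + √2) / 14, 0],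
    ![(3 - √2) / 7, (11 + √2) / 14, 0],
    ![(26 + 7 * √2) / 17, 0, (12 - 2 * √2) / 17],
    ![0, 0, (10 + √2) / 14]]

theorem range_nestedVertices_subset_outerP : range nestedVertices ⊆ outerP := by
  have h₁ := Real.one_lt_sqrt_two
  have h₂ := Real.sqrt_two_lt_three_halves
  rintro _ ⟨i, rfl⟩
  fin_cases i <;> refine ⟨?_, ?_, ?_, ?_, ?_, ?_⟩ <;> simp [nestedVertices] <;> linarith

theorem lineMap_mem_convexHull_range {ι E : Type*} [AddCommGroup E] [Module ℝ E] (q : ι → E)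
    (i j : ι) {c : ℝ} (hc : c ∈ Icc 0 1) :
    AffineMap.lineMap (q i) (q j) c ∈ convexHull ℝ (range q) :=
  (convex_convexHull ℝ _).lineMap_mem (subset_convexHull ℝ _ (mem_range_self i))
    (subset_convexHull ℝ _ (mem_range_self j)) hc

theorem innerS_subset_convexHull_range_nestedVertices :
    innerS ⊆ convexHull ℝ (range nestedVertices) := by
  have hsq : √2 ^ 2 = 2 := Real.sq_sqrt zero_le_two
  have h₁ := Real.one_lt_sqrt_two
  have h₂ := Real.sqrt_two_lt_three_halves
  have mem_of_eq : ∀ (i j : Fin 5) (c : ℝ) {s : Fin 3 → ℝ}, c ∈ Icc 0 1 →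
      s = AffineMap.lineMap (nestedVertices i) (nestedVertices j) c →
      s ∈ convexHull ℝ (range nestedVertices) := by
    rintro i j c _ hc rfl
    exact lineMap_mem_convexHull_range _ i j hc
  refine convexHull_min ?_ (convex_convexHull ℝ _)
  rintro s (rfl | rfl | rfl | rfl | rfl | rfl)
  map_tacs [
    refine mem_of_eq 0 1 ((3 - √2) / 4) ⟨by linarith, by linarith⟩ ?_;
    refine mem_of_eq 1 2 ((4 - √2) / 8) ⟨by linarith, by linarith⟩ ?_;
    refine mem_of_eq 0 2 ((11 - √2) / 11) ⟨by linarith, by linarith⟩ ?_;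
    refine mem_of_eq 0 3 ((6 + √2) / 8) ⟨by linarith, by linarith⟩ ?_;
    refine mem_of_eq 4 3 ((26 - 7 * √2) / 68) ⟨by linarith, by linarith⟩ ?_;
    refine mem_of_eq 0 4 ((10 - √2) / 12) ⟨by linarith, by linarith⟩ ?_]
  all_goals
    ext x
    fin_cases x <;> simp [nestedVertices, AffineMap.lineMap_apply] <;> linarith

theorem isNested_range_nestedVertices : IsNested (range nestedVertices) :=
  ⟨innerS_subset_convexHull_range_nestedVertices,
    convexHull_min range_nestedVertices_subset_outerP convex_outerP⟩

end Existence

/-- (i) There are five points spanning a polytope nested between `P` and `S`;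
(ii) in any such choice of five points, one of them equals `(2 − √2, 0, 0)`;
in particular no five rational points span a polytope nested between `P` and `S`;
(iii) no four points span a polytope nested between `P` and `S`. -/
theorem stmt17 :
    (∃ q : Fin 5 → Fin 3 → ℝ,
      innerS ⊆ convexHull ℝ (Set.range q) ∧ convexHull ℝ (Set.range q) ⊆ outerP) ∧
    (∀ q : Fin 5 → Fin 3 → ℝ,
      innerS ⊆ convexHull ℝ (Set.range q) → convexHull ℝ (Set.range q) ⊆ outerP →
        ∃ i, q i = ![2 - Real.sqrt 2, 0, 0]) ∧
    (¬ ∃ q : Fin 5 → Fin 3 → ℚ,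
      innerS ⊆ convexHull ℝ (Set.range fun i => fun x => ((q i x : ℝ))) ∧
      convexHull ℝ (Set.range fun i => fun x => ((q i x : ℝ))) ⊆ outerP) ∧
    (¬ ∃ q : Fin 4 → Fin 3 → ℝ,
      innerS ⊆ convexHull ℝ (Set.range q) ∧ convexHull ℝ (Set.range q) ⊆ outerP) := by
  have hfive : ∀ q : Fin 5 → Fin 3 → ℝ, innerS ⊆ convexHull ℝ (range q) →
      convexHull ℝ (range q) ⊆ outerP → ∃ i, q i = ![2 - √2, 0, 0] := fun q hS hP =>
    IsNested.mem_of_encard_le_five ⟨hS, hP⟩ ((encard_range_le q).trans (by simp))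
  refine ⟨⟨nestedVertices, isNested_range_nestedVertices⟩, hfive, ?_, ?_⟩
  · rintro ⟨q, hS, hP⟩
    obtain ⟨i, hi⟩ := hfive _ hS hP
    have hx : (q i 0 : ℝ) = 2 - √2 := congrFun hi 0
    exact irrational_sqrt_two ⟨2 - q i 0, by push_cast; linarith⟩
  · rintro ⟨q, hS, hP⟩
    have hfour := (IsNested.five_le_encard ⟨hS, hP⟩).trans (encard_range_le q)
    norm_num at hfour
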